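/- Let α ∈ (0,1) and β > β*(α), where β*(α) = (2/(1−α))·arctanh(t*)/t* and t* ∈ (0,1) is the unique solution of (1−t²)·arctanh(t)/t = (1−α)/(1+α). Then G_{α,β} has exactly four local maximizers on [−1,1]²: the two global maximizers (m_g,m_g) and (−m_g,−m_g), where m_g is the unique positive solution of m = tanh((β/2)(1+α)m), and the two anti-symmetric local maximizers (m_l,−m_l) and (−m_l,m_l), where m_l is the unique positive solution of m = tanh((β/2)(1−α)m); at each of these four points the Hessian of G_{α,β} is negative definite. -/

import Mathlib

open Filter

noncomputable section

/-- `E_α(m)`. -/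
def Ebil (a : ℝ) (m : ℝ × ℝ) : ℝ := (m.1 ^ 2 + m.2 ^ 2) / 4 + (a / 2) * m.1 * m.2

/-- One-dimensional entropy term. -/
def entI (x : ℝ) : ℝ :=
  ((1 + x) / 2) * Real.log ((1 + x) / 2) + ((1 - x) / 2) * Real.log ((1 - x) / 2)

/-- Free energy functional `G_{α,β}`. -/
def Gfun (a β : ℝ) (m : ℝ × ℝ) : ℝ := β * Ebil a m - (entI m.1 + entI m.2)

/-- Inverse hyperbolic tangent. -/
def arctanh (x : ℝ) : ℝ := (1 / 2) * Real.log ((1 + x) / (1 - x))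

/-- The Hessian matrix of `G_{α,β}` at `m`. -/
def hessG (a β : ℝ) (m : ℝ × ℝ) : Matrix (Fin 2) (Fin 2) ℝ :=
  !![β / 2 - 1 / (1 - m.1 ^ 2), β * a / 2; β * a / 2, β / 2 - 1 / (1 - m.2 ^ 2)]

/-- The square `[−1,1]²`. -/
def box : Set (ℝ × ℝ) := Set.Icc (-1 : ℝ) 1 ×ˢ Set.Icc (-1 : ℝ) 1

section

open Set Topology

lemma arctanh_eq_sub {x : ℝ} (h1 : -1 < x) (h2 : x < 1) :
    arctanh x = (1 / 2) * (Real.log (1 + x) - Real.log (1 - x)) := by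
  rw [arctanh, Real.log_div (by linarith) (by linarith)]

lemma arctanh_eq_artanh {x : ℝ} (h1 : -1 < x) (h2 : x < 1) : arctanh x = Real.artanh x := by
  rw [arctanh, Real.artanh_eq_half_log ⟨h1.le, h2.le⟩]

lemma arctanh_tanh (x : ℝ) : arctanh (Real.tanh x) = x := by
  rw [arctanh_eq_artanh (Real.neg_one_lt_tanh x) (Real.tanh_lt_one x), Real.artanh_tanh]

lemma arctanh_neg (x : ℝ) : arctanh (-x) = -arctanh x := by
  rw [arctanh, arctanh, sub_neg_eq_add, ← sub_eq_add_neg, ← inv_div (1 + x), Real.log_inv]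
  ring

lemma arctanh_add {x z : ℝ} (hx0 : -1 < x) (hx1 : x < 1) (hz0 : -1 < z) (hz1 : z < 1) :
    arctanh x + arctanh z = arctanh ((x + z) / (1 + x * z)) := by
  have hp : 0 < 1 + x * z := by nlinarith
  rw [arctanh, arctanh, arctanh, ← mul_add, ← Real.log_mul]
  · congr 2
    have h1 : 1 - x ≠ 0 := by linarith
    have h2 : 1 - z ≠ 0 := by linarith
    have h3 : 1 - (x + z) / (1 + x * z) ≠ 0 := by
      have : 1 - (x + z) / (1 + x * z) = (1 - x) * (1 - z) / (1 + x * z) := by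
        field_simp
        ring
      rw [this]
      positivity
    rw [div_mul_div_comm, div_eq_div_iff (mul_ne_zero h1 h2) h3]
    field_simp
    ring
  · exact (div_pos (by linarith) (by linarith)).ne'
  · exact (div_pos (by linarith) (by linarith)).ne'

lemma one_sub_sq_pos {x : ℝ} (h1 : -1 < x) (h2 : x < 1) : 0 < 1 - x ^ 2 := by nlinarith

lemma hasDerivAt_arctanh {x : ℝ} (h1 : -1 < x) (h2 : x < 1) :
    HasDerivAt arctanh (1 / (1 - x ^ 2)) x := by
  have e : (fun y => (1 / 2) * (Real.log (1 + y) - Real.log (1 - y))) =ᶠ[𝓝 x] arctanh := by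
    filter_upwards [Ioo_mem_nhds h1 h2] with y hy
    exact (arctanh_eq_sub hy.1 hy.2).symm
  have hp : 1 + x ≠ 0 := by linarith
  have hm : 1 - x ≠ 0 := by linarith
  have hq : 1 - x ^ 2 ≠ 0 := (one_sub_sq_pos h1 h2).ne'
  refine HasDerivAt.congr_of_eventuallyEq ?_ e.symm
  refine (((((hasDerivAt_id' x).const_add 1).log hp).sub
    (((hasDerivAt_id' x).const_sub 1).log hm)).const_mul (1 / 2 : ℝ)).congr_deriv ?_
  field_simp
  ring

lemma hasDerivAt_entI {x : ℝ} (h1 : -1 < x) (h2 : x < 1) :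
    HasDerivAt entI (arctanh x) x := by
  have hp : (1 + x) / 2 ≠ 0 := by linarith
  have hm : (1 - x) / 2 ≠ 0 := by linarith
  have ip : HasDerivAt (fun y : ℝ => (1 + y) / 2) (1 / 2) x :=
    ((hasDerivAt_id x).const_add 1).div_const 2
  have im : HasDerivAt (fun y : ℝ => (1 - y) / 2) (-1 / 2) x :=
    ((hasDerivAt_id x).const_sub 1).div_const 2
  refine ((ip.mul (ip.log hp)).add (im.mul (im.log hm))).congr_deriv ?_
  rw [arctanh_eq_sub h1 h2, Real.log_div (by linarith) two_ne_zero,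
    Real.log_div (by linarith) two_ne_zero]
  have hp' : 1 + x ≠ 0 := by linarith
  have hm' : 1 - x ≠ 0 := by linarith
  field_simp
  ring

lemma continuous_entI : Continuous entI := by
  unfold entI
  exact (Real.continuous_mul_log.comp (by fun_prop : Continuous fun x : ℝ => (1 + x) / 2)).add
    (Real.continuous_mul_log.comp (by fun_prop : Continuous fun x : ℝ => (1 - x) / 2))

lemma entI_neg (x : ℝ) : entI (-x) = entI x := by
  simp only [entI, sub_neg_eq_add, ← sub_eq_add_neg]
  ring

lemma lt_arctanh {s : ℝ} (h0 : 0 < s) (h1 : s < 1) : s < arctanh s := by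
  have hd : ∀ x ∈ Ico (0 : ℝ) 1, HasDerivAt (fun x => arctanh x - x) (1 / (1 - x ^ 2) - 1) x :=
    fun x hx => (hasDerivAt_arctanh (by linarith [hx.1]) hx.2).sub (hasDerivAt_id x)
  have hm : StrictMonoOn (fun x => arctanh x - x) (Ico 0 1) := by
    refine strictMonoOn_of_deriv_pos (convex_Ico 0 1)
      (fun x hx => (hd x hx).continuousAt.continuousWithinAt) fun x hx => ?_
    rw [interior_Ico] at hx
    rw [(hd x ⟨hx.1.le, hx.2⟩).deriv, sub_pos]
    exact one_lt_one_div (one_sub_sq_pos (by linarith [hx.1]) hx.2) (by nlinarith [hx.1])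
  have := hm ⟨le_rfl, one_pos⟩ ⟨h0.le, h1⟩ h0
  simp only [arctanh, add_zero, sub_zero, div_one, Real.log_one, mul_zero] at this ⊢
  linarith

lemma arctanh_lt {s : ℝ} (h0 : 0 < s) (h1 : s < 1) : arctanh s < s / (1 - s ^ 2) := by
  have hd : ∀ x ∈ Ico (0 : ℝ) 1, HasDerivAt (fun x => x / (1 - x ^ 2) - arctanh x)
      (2 * x ^ 2 / (1 - x ^ 2) ^ 2) x := by
    intro x hx
    have hq := (one_sub_sq_pos (by linarith [hx.1]) hx.2).ne'
    refine (((hasDerivAt_id' x).div ((hasDerivAt_pow 2 x).const_sub 1) hq).sub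
      (hasDerivAt_arctanh (by linarith [hx.1]) hx.2)).congr_deriv ?_
    field_simp
    push_cast
    ring
  have hm : StrictMonoOn (fun x => x / (1 - x ^ 2) - arctanh x) (Ico 0 1) := by
    refine strictMonoOn_of_deriv_pos (convex_Ico 0 1)
      (fun x hx => (hd x hx).continuousAt.continuousWithinAt) fun x hx => ?_
    rw [interior_Ico] at hx
    rw [(hd x ⟨hx.1.le, hx.2⟩).deriv]
    have hq := one_sub_sq_pos (by linarith [hx.1]) hx.2
    have := hx.1
    positivity
  have := hm ⟨le_rfl, one_pos⟩ ⟨h0.le, h1⟩ h0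
  simp only [arctanh, add_zero, sub_zero, div_one, Real.log_one, mul_zero, zero_div] at this ⊢
  linarith

lemma strictMonoOn_arctanh_div : StrictMonoOn (fun t => arctanh t / t) (Ioo 0 1) := by
  have hd : ∀ x ∈ Ioo (0 : ℝ) 1, HasDerivAt (fun t => arctanh t / t)
      ((1 / (1 - x ^ 2) * x - arctanh x * 1) / x ^ 2) x := fun x hx =>
    (hasDerivAt_arctanh (by linarith [hx.1]) hx.2).div (hasDerivAt_id x) hx.1.ne'
  refine strictMonoOn_of_deriv_pos (convex_Ioo 0 1)
    (fun x hx => (hd x hx).continuousAt.continuousWithinAt) fun x hx => ?_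
  rw [interior_Ioo] at hx
  rw [(hd x hx).deriv]
  have h := arctanh_lt hx.1 hx.2
  refine div_pos ?_ (pow_pos hx.1 2)
  rw [one_div_mul_eq_div]
  linarith

lemma strictAntiOn_one_sub_sq_mul_arctanh_div :
    StrictAntiOn (fun t => (1 - t ^ 2) * arctanh t / t) (Ioo 0 1) := by
  have hd : ∀ x ∈ Ioo (0 : ℝ) 1, HasDerivAt (fun t => (1 - t ^ 2) * arctanh t / t)
      ((x - (1 + x ^ 2) * arctanh x) / x ^ 2) x := by
    intro x hx
    have hq := (one_sub_sq_pos (by linarith [hx.1]) hx.2).ne'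
    have hx0 := hx.1.ne'
    refine ((((hasDerivAt_pow 2 x).const_sub 1).mul
      (hasDerivAt_arctanh (by linarith [hx.1]) hx.2)).div (hasDerivAt_id' x) hx0).congr_deriv ?_
    simp only [Pi.mul_apply]
    field_simp
    push_cast
    ring
  refine strictAntiOn_of_deriv_neg (convex_Ioo 0 1)
    (fun x hx => (hd x hx).continuousAt.continuousWithinAt) fun x hx => ?_
  rw [interior_Ioo] at hx
  rw [(hd x hx).deriv]
  have h := lt_arctanh hx.1 hx.2
  exact div_neg_of_neg_of_pos (by nlinarith [mul_nonneg (sq_nonneg x) (hx.1.trans h).le]) (pow_pos hx.1 2)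

lemma IsLocalMax.second_deriv_nonpos {f f' : ℝ → ℝ} {x₀ c : ℝ} (h : IsLocalMax f x₀)
    (hf : ∀ᶠ x in 𝓝 x₀, HasDerivAt f (f' x) x) (hf' : HasDerivAt f' c x₀) : c ≤ 0 := by
  by_contra! hc
  have e : deriv f =ᶠ[𝓝 x₀] f' := hf.mono fun x hx => hx.deriv
  have hmin : IsLocalMin f x₀ :=
    isLocalMin_of_deriv_deriv_pos (by rwa [e.deriv_eq, hf'.deriv]) h.deriv_eq_zero
      hf.self_of_nhds.continuousAt
  have hconst : f =ᶠ[𝓝 x₀] fun _ => f x₀ := by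
    filter_upwards [h, hmin] with x h1 h2
    exact le_antisymm h1 h2
  have h0 : deriv (deriv f) x₀ = 0 := by
    rw [hconst.deriv.deriv_eq]
    simp
  rw [e.deriv_eq, hf'.deriv] at h0
  exact hc.ne' h0

lemma saddle_of_bounds {P T W p q : ℝ} (hP : 0 ≤ P) (hW : W = 2 * T - 1 + P ^ 2)
    (hT : T < 1 + P) (hp : 1 < p * (1 + P)) (hq : 1 < q * (1 - P)) (hqW : q * W < T)
    (hF : 0 ≤ 1 - q * T - p * (T - q * W)) : False := by
  have hneg : (1 + P - T) * (1 - q * (1 - P)) < 0 :=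
    mul_neg_of_pos_of_neg (by linarith) (by linarith)
  have hid : (1 + P) * (1 - q * T - p * (T - q * W)) =
      (1 + P - T) * (1 - q * (1 - P)) - (p * (1 + P) - 1) * (T - q * W) := by
    rw [hW]
    ring
  have h3 : 0 ≤ (1 + P) * (1 - q * T - p * (T - q * W)) := mul_nonneg (by linarith) hF
  have h4 : 0 < (p * (1 + P) - 1) * (T - q * W) := mul_pos (by linarith) (by linarith)
  linarith

/-- A critical point off the (anti-)diagonal is a saddle. -/
lemma no_asymmetric_of_det_nonneg {a b x z : ℝ} (hb : 0 < b)
    (hz : 0 < z) (hzx : z < x) (hx : x < 1)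
    (ex : arctanh x = b * (x - a * z)) (ez : arctanh z = b * (z - a * x))
    (hX : 0 ≤ 1 - b * (1 - x ^ 2)) (hZ : 0 ≤ 1 - b * (1 - z ^ 2))
    (hdet : (b * a) ^ 2 * ((1 - x ^ 2) * (1 - z ^ 2)) ≤
      (1 - b * (1 - x ^ 2)) * (1 - b * (1 - z ^ 2))) : False := by
  have hxz : 0 < x * z := mul_pos (by linarith) hz
  have hxz1 : x * z < 1 := by nlinarith
  have hsum := arctanh_add (x := x) (z := z) (by linarith) hx (by linarith) (by linarith)
  have hdif := arctanh_add (x := x) (z := -z) (by linarith) hx (by linarith) (by linarith)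
  have h1 := lt_arctanh (s := (x + z) / (1 + x * z)) (div_pos (by linarith) (by linarith))
    (by rw [div_lt_one (by linarith)]; nlinarith)
  have h2 := lt_arctanh (s := (x + -z) / (1 + x * -z)) (div_pos (by linarith) (by linarith))
    (by rw [div_lt_one (by linarith)]; nlinarith)
  rw [← hsum, ex, ez, div_lt_iff₀ (by linarith)] at h1
  rw [← hdif, arctanh_neg, ex, ez, div_lt_iff₀ (by linarith)] at h2
  set p := b * (1 - a) with hp
  set q := b * (1 + a) with hq
  have hp0 : 1 < p * (1 + x * z) := by
    have : (x + z) * 1 < (x + z) * (p * (1 + x * z)) := by rw [hp]; linarith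
    exact lt_of_mul_lt_mul_left this (by linarith)
  have hq0 : 1 < q * (1 - x * z) := by
    have : (x - z) * 1 < (x - z) * (q * (1 - x * z)) := by rw [hq]; linarith
    exact lt_of_mul_lt_mul_left this (by linarith)
  have hXp := one_sub_sq_pos (by linarith) hx
  have hZp := one_sub_sq_pos (x := z) (by linarith) (by linarith)
  set T := ((1 - x ^ 2) + (1 - z ^ 2)) / 2 with hT
  set W := (1 - x ^ 2) * (1 - z ^ 2) with hW
  have hW0 : 0 < W := mul_pos hXp hZp
  have hWT : W < T ^ 2 := by
    have : 0 < (x ^ 2 - z ^ 2) ^ 2 := pow_pos (by nlinarith) 2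
    rw [hW, hT]
    linarith
  have hw := Real.sq_sqrt hW0.le
  have hw0 := Real.sqrt_pos.2 hW0
  have hwT : √W < T := (Real.sqrt_lt' (by linarith)).2 hWT
  set w := √W
  have hbw : b * w ≤ 1 := by
    refine (abs_le_of_sq_le_sq' ?_ zero_le_one).2
    have := mul_le_one₀ (sub_nonneg.1 hX) (mul_nonneg hb.le hZp.le) (sub_nonneg.1 hZ)
    rw [mul_pow, hw, hW]
    linarith
  have hqw : q * w ≤ 1 := by
    have : b * a * w ≤ 1 - b * w := by
      refine (abs_le_of_sq_le_sq' ?_ (by linarith)).2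
      rw [mul_pow, hw, sub_sq, mul_pow b w, hw]
      nlinarith [mul_lt_mul_of_pos_left hwT hb]
    rw [hq]
    linarith
  have hqW : q * W < T := by
    rw [← hw]
    nlinarith
  have hF : 0 ≤ 1 - q * T - p * (T - q * W) := by
    have : 1 - q * T - p * (T - q * W) =
        (1 - b * (1 - x ^ 2)) * (1 - b * (1 - z ^ 2)) - (b * a) ^ 2 * W := by
      rw [hp, hq, hT, hW]
      ring
    linarith
  have hT1 : T < 1 + x * z := by
    rw [hT]
    nlinarith
  exact saddle_of_bounds hxz.le (by rw [hT, hW]; ring) hT1 hp0 hq0 hqW hF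

lemma Gfun_swap (a β : ℝ) (m : ℝ × ℝ) : Gfun a β m.swap = Gfun a β m := by
  simp only [Gfun, Ebil, Prod.fst_swap, Prod.snd_swap]
  ring

lemma Gfun_neg (a β : ℝ) (m : ℝ × ℝ) : Gfun a β (-m) = Gfun a β m := by
  simp only [Gfun, Ebil, Prod.fst_neg, Prod.snd_neg, entI_neg]
  ring

lemma continuous_Gfun (a β : ℝ) : Continuous (Gfun a β) := by
  have := continuous_entI
  unfold Gfun Ebil
  fun_prop

lemma swap_mem_box {m : ℝ × ℝ} (h : m ∈ box) : m.swap ∈ box := ⟨h.2, h.1⟩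

lemma neg_mem_box {m : ℝ × ℝ} (h : m ∈ box) : -m ∈ box := by
  obtain ⟨⟨h1, h2⟩, h3, h4⟩ := h
  exact ⟨⟨neg_le_neg h2, neg_le.1 h1⟩, neg_le_neg h4, neg_le.1 h3⟩

lemma IsLocalMaxOn.comp_symmetry {X : Type*} [TopologicalSpace X] {f : X → ℝ} {s : Set X}
    {g : X → X} {x : X} (h : IsLocalMaxOn f s (g x)) (hg : Continuous g) (hs : MapsTo g s s)
    (hf : ∀ y, f (g y) = f y) : IsLocalMaxOn f s x := by
  have t : Tendsto g (𝓝[s] x) (𝓝[s] (g x)) := hg.continuousWithinAt.tendsto_nhdsWithin hs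
  filter_upwards [t.eventually h] with y hy
  rwa [hf, hf] at hy

lemma isLocalMaxOn_Gfun_swap {a β x y : ℝ} (h : IsLocalMaxOn (Gfun a β) box (x, y)) :
    IsLocalMaxOn (Gfun a β) box (y, x) :=
  IsLocalMaxOn.comp_symmetry (g := Prod.swap) h continuous_swap (fun _ => swap_mem_box)
    (Gfun_swap a β)

lemma isLocalMaxOn_Gfun_neg {a β x y : ℝ} (h : IsLocalMaxOn (Gfun a β) box (x, y)) :
    IsLocalMaxOn (Gfun a β) box (-x, -y) :=
  IsLocalMaxOn.comp_symmetry (g := fun m => -m) (by simpa using h) continuous_neg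
    (fun _ => neg_mem_box) (Gfun_neg a β)

lemma not_isLocalMaxOn_one {a β y : ℝ} (ha0 : 0 ≤ a) (ha1 : a ≤ 1) (hβ : 0 ≤ β)
    (hy : y ∈ Icc (-1 : ℝ) 1) : ¬ IsLocalMaxOn (Gfun a β) box (1, y) := by
  intro h
  have t : Tendsto (fun ε : ℝ => ((1 - ε, y) : ℝ × ℝ)) (𝓝[>] 0) (𝓝[box] (1, y)) := by
    refine tendsto_nhdsWithin_iff.2 ⟨?_, ?_⟩
    · refine tendsto_nhdsWithin_of_tendsto_nhds ?_
      have : Continuous fun ε : ℝ => ((1 - ε, y) : ℝ × ℝ) := by fun_prop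
      simpa using this.tendsto 0
    · filter_upwards [Ioo_mem_nhdsGT (one_pos : (0 : ℝ) < 1)] with ε hε
      exact ⟨⟨by linarith [hε.2], by linarith [hε.1]⟩, hy⟩
  have he : (0 : ℝ) < min 1 (2 * Real.exp (-(2 * β))) := by positivity
  obtain ⟨ε, hG, hε0, hε⟩ := ((t.eventually h).and (Ioo_mem_nhdsGT he)).exists
  obtain ⟨hε1, hεβ⟩ := lt_min_iff.1 hε
  have hlog : Real.log (ε / 2) < -(2 * β) := by
    rw [Real.log_lt_iff_lt_exp (by linarith)]
    linarith
  have hlog' : Real.log ((2 - ε) / 2) ≤ 0 := Real.log_nonpos (by linarith) (by linarith)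
  have h1 : entI 1 = 0 := by norm_num [entI]
  have h2 : entI (1 - ε) < -(β * ε) := by
    have : entI (1 - ε) =
        ((2 - ε) / 2) * Real.log ((2 - ε) / 2) + (ε / 2) * Real.log (ε / 2) := by
      unfold entI
      ring_nf
    rw [this]
    nlinarith
  simp only [Gfun, Ebil, h1] at hG
  have h3 : a * y ≤ 1 := by nlinarith [hy.1, hy.2]
  have h4 : 0 ≤ β * (ε * (1 - a * y)) := by
    have : 0 ≤ 1 - a * y := by linarith
    positivity
  nlinarith [mul_nonneg hβ (sq_nonneg ε)]

lemma mem_Ioo_of_isLocalMaxOn_Gfun {a β x y : ℝ} (ha0 : 0 ≤ a) (ha1 : a ≤ 1) (hβ : 0 ≤ β)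
    (hm : (x, y) ∈ box) (h : IsLocalMaxOn (Gfun a β) box (x, y)) : x ∈ Ioo (-1 : ℝ) 1 := by
  obtain ⟨⟨h1, h2⟩, hy⟩ := hm
  refine ⟨lt_of_le_of_ne h1 ?_, lt_of_le_of_ne h2 ?_⟩
  · rintro rfl
    refine not_isLocalMaxOn_one ha0 ha1 hβ (y := -y) ⟨neg_le_neg hy.2, neg_le.1 hy.1⟩ ?_
    simpa using isLocalMaxOn_Gfun_neg h
  · rintro rfl
    exact not_isLocalMaxOn_one ha0 ha1 hβ hy h

lemma derivative_tests_of_isLocalMaxOn_Gfun {a β x y : ℝ} (hx : x ∈ Ioo (-1 : ℝ) 1)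
    (hy : y ∈ Ioo (-1 : ℝ) 1) (h : IsLocalMaxOn (Gfun a β) box (x, y)) (v w : ℝ) :
    β / 2 * (x * v + y * w) + β * a / 2 * (v * y + w * x) - (arctanh x * v + arctanh y * w) = 0 ∧
    β / 2 * (v ^ 2 + w ^ 2) + β * a * (v * w) - (v ^ 2 / (1 - x ^ 2) + w ^ 2 / (1 - y ^ 2)) ≤ 0 := by
  have hbox : box ∈ 𝓝 (x, y) := prod_mem_nhds (Icc_mem_nhds hx.1 hx.2) (Icc_mem_nhds hy.1 hy.2)
  have hmax : IsLocalMax (Gfun a β) (x, y) := h.isLocalMax hbox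
  have hcx : Continuous fun t : ℝ => x + t * v := by fun_prop
  have hcy : Continuous fun t : ℝ => y + t * w := by fun_prop
  have tx : Tendsto (fun t : ℝ => x + t * v) (𝓝 0) (𝓝 x) := by simpa using hcx.tendsto 0
  have ty : Tendsto (fun t : ℝ => y + t * w) (𝓝 0) (𝓝 y) := by simpa using hcy.tendsto 0
  have hline : IsLocalMax (fun t : ℝ => Gfun a β (x + t * v, y + t * w)) 0 := by
    filter_upwards [(tx.prodMk_nhds ty).eventually hmax] with t ht
    simpa using ht
  have dx : ∀ t : ℝ, HasDerivAt (fun t : ℝ => x + t * v) v t := fun t => by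
    simpa using ((hasDerivAt_id' t).mul_const v).const_add x
  have dy : ∀ t : ℝ, HasDerivAt (fun t : ℝ => y + t * w) w t := fun t => by
    simpa using ((hasDerivAt_id' t).mul_const w).const_add y
  have d1 : ∀ᶠ t : ℝ in 𝓝 0, HasDerivAt (fun t : ℝ => Gfun a β (x + t * v, y + t * w))
      (β / 2 * ((x + t * v) * v + (y + t * w) * w) +
        β * a / 2 * (v * (y + t * w) + w * (x + t * v)) -
        (arctanh (x + t * v) * v + arctanh (y + t * w) * w)) t := by
    filter_upwards [tx.eventually (Ioo_mem_nhds hx.1 hx.2),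
      ty.eventually (Ioo_mem_nhds hy.1 hy.2)] with t hxt hyt
    have ex := (hasDerivAt_entI hxt.1 hxt.2).comp t (dx t)
    have ey := (hasDerivAt_entI hyt.1 hyt.2).comp t (dy t)
    refine (((((((dx t).pow 2).add ((dy t).pow 2)).div_const 4).add
      (((dx t).const_mul (a / 2)).mul (dy t))).const_mul β).sub (ex.add ey)).congr_deriv ?_
    simp only [Nat.cast_ofNat]
    ring
  have d2 : HasDerivAt (fun t : ℝ => β / 2 * ((x + t * v) * v + (y + t * w) * w) +
        β * a / 2 * (v * (y + t * w) + w * (x + t * v)) -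
        (arctanh (x + t * v) * v + arctanh (y + t * w) * w))
      (β / 2 * (v ^ 2 + w ^ 2) + β * a * (v * w) -
        (v ^ 2 / (1 - x ^ 2) + w ^ 2 / (1 - y ^ 2))) 0 := by
    have ax := (hasDerivAt_arctanh hx.1 hx.2).comp_of_eq (0 : ℝ) (dx 0) (by simp)
    have ay := (hasDerivAt_arctanh hy.1 hy.2).comp_of_eq (0 : ℝ) (dy 0) (by simp)
    refine ((((((dx 0).mul_const v).add ((dy 0).mul_const w)).const_mul (β / 2)).add
      ((((dy 0).const_mul v).add ((dx 0).const_mul w)).const_mul (β * a / 2))).sub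
      ((ax.mul_const v).add (ay.mul_const w))).congr_deriv ?_
    ring
  refine ⟨?_, hline.second_deriv_nonpos d1 d2⟩
  have := hline.hasDerivAt_eq_zero d1.self_of_nhds
  simpa using this

lemma entI_ge_quadratic {x c : ℝ} (hx : x ∈ Ioo (-1 : ℝ) 1) (hc : c < 1 / (1 - x ^ 2)) :
    ∀ᶠ s in 𝓝 x, entI x + arctanh x * (s - x) + c / 2 * (s - x) ^ 2 ≤ entI s := by
  have d1 : ∀ᶠ s in 𝓝 x, HasDerivAt
      (fun s => entI s - (arctanh x * (s - x) + c / 2 * (s - x) ^ 2))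
      (arctanh s - (arctanh x + c * (s - x))) s := by
    filter_upwards [Ioo_mem_nhds hx.1 hx.2] with s hs
    have ds := (hasDerivAt_id' s).sub_const x
    refine ((hasDerivAt_entI hs.1 hs.2).sub
      ((ds.const_mul (arctanh x)).add ((ds.pow 2).const_mul (c / 2)))).congr_deriv ?_
    simp only [Nat.cast_ofNat]
    ring
  have d2 : HasDerivAt (fun s => arctanh s - (arctanh x + c * (s - x)))
      (1 / (1 - x ^ 2) - c) x := by
    refine ((hasDerivAt_arctanh hx.1 hx.2).sub
      ((((hasDerivAt_id' x).sub_const x).const_mul c).const_add (arctanh x))).congr_deriv ?_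
    ring
  have e : deriv (fun s => entI s - (arctanh x * (s - x) + c / 2 * (s - x) ^ 2)) =ᶠ[𝓝 x]
      fun s => arctanh s - (arctanh x + c * (s - x)) := d1.mono fun s hs => hs.deriv
  have hmin : IsLocalMin (fun s => entI s - (arctanh x * (s - x) + c / 2 * (s - x) ^ 2)) x := by
    refine isLocalMin_of_deriv_deriv_pos ?_ ?_ d1.self_of_nhds.continuousAt
    · rw [e.deriv_eq, d2.deriv]
      linarith
    · rw [e.self_of_nhds]
      ring
  filter_upwards [hmin] with s hs
  simp only [sub_self] at hs
  linarith

lemma isLocalMaxOn_Gfun {a β x y : ℝ} (ha : 0 ≤ a) (hβ : 0 ≤ β)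
    (hx : x ∈ Ioo (-1 : ℝ) 1) (hy : y ∈ Ioo (-1 : ℝ) 1)
    (ex : arctanh x = β / 2 * (x + a * y)) (ey : arctanh y = β / 2 * (y + a * x))
    (hx2 : β / 2 * (1 + a) < 1 / (1 - x ^ 2)) (hy2 : β / 2 * (1 + a) < 1 / (1 - y ^ 2)) :
    IsLocalMaxOn (Gfun a β) box (x, y) := by
  refine IsLocalMax.on ?_ _
  have h1 := (continuous_fst.tendsto (x, y)).eventually (entI_ge_quadratic hx hx2)
  have h2 := (continuous_snd.tendsto (x, y)).eventually (entI_ge_quadratic hy hy2)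
  filter_upwards [h1, h2] with m h3 h4
  rw [ex] at h3
  rw [ey] at h4
  simp only [Gfun, Ebil]
  nlinarith [mul_nonneg (mul_nonneg ha hβ) (sq_nonneg ((m.1 - x) - (m.2 - y)))]

lemma posDef_neg_hessG {a β : ℝ} {m : ℝ × ℝ} (ha : 0 ≤ a) (hβ : 0 ≤ β)
    (h1 : β / 2 * (1 + a) < 1 / (1 - m.1 ^ 2)) (h2 : β / 2 * (1 + a) < 1 / (1 - m.2 ^ 2)) :
    (-(hessG a β m)).PosDef := by
  refine Matrix.PosDef.of_dotProduct_mulVec_pos ?_ fun v hv => ?_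
  · ext i j
    fin_cases i <;> fin_cases j <;> simp [hessG]
  · have hv' : v 0 ≠ 0 ∨ v 1 ≠ 0 := by
      by_contra! h
      exact hv (funext fun i => by fin_cases i <;> simp [h.1, h.2])
    simp only [hessG, dotProduct, Matrix.mulVec, Fin.sum_univ_two, Pi.star_apply,
      Matrix.neg_apply, Matrix.of_apply, Matrix.cons_val', Matrix.cons_val_zero,
      Matrix.cons_val_one, Matrix.cons_val_fin_one, star_trivial]
    have h3 : 0 ≤ a * β * (v 0 - v 1) ^ 2 := by positivity
    have h4 : 0 < (1 / (1 - m.1 ^ 2) - β / 2 * (1 + a)) * v 0 ^ 2 +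
        (1 / (1 - m.2 ^ 2) - β / 2 * (1 + a)) * v 1 ^ 2 := by
      rcases hv' with h | h
      · have := mul_pos (sub_pos.2 h1) (pow_pos (abs_pos.2 h) 2)
        have := mul_nonneg (sub_pos.2 h2).le (sq_nonneg (v 1))
        rw [sq_abs] at *
        linarith
      · have := mul_pos (sub_pos.2 h2) (pow_pos (abs_pos.2 h) 2)
        have := mul_nonneg (sub_pos.2 h1).le (sq_nonneg (v 0))
        rw [sq_abs] at *
        linarith
    linarith

lemma critical_of_isLocalMaxOn_Gfun {a β x y : ℝ} (hx : x ∈ Ioo (-1 : ℝ) 1)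
    (hy : y ∈ Ioo (-1 : ℝ) 1) (h : IsLocalMaxOn (Gfun a β) box (x, y)) :
    arctanh x = β / 2 * (x + a * y) ∧ arctanh y = β / 2 * (y + a * x) ∧
    0 ≤ 1 - β / 2 * (1 - x ^ 2) ∧ 0 ≤ 1 - β / 2 * (1 - y ^ 2) ∧
    (β / 2 * a) ^ 2 * ((1 - x ^ 2) * (1 - y ^ 2)) ≤
      (1 - β / 2 * (1 - x ^ 2)) * (1 - β / 2 * (1 - y ^ 2)) := by
  have H := derivative_tests_of_isLocalMaxOn_Gfun hx hy h
  have hX := one_sub_sq_pos hx.1 hx.2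
  have hY := one_sub_sq_pos hy.1 hy.2
  have h10 := H 1 0
  have h01 := H 0 1
  have hp : β / 2 ≤ 1 / (1 - x ^ 2) := by
    have := h10.2
    norm_num at this ⊢
    linarith
  have hr : β / 2 ≤ 1 / (1 - y ^ 2) := by
    have := h01.2
    norm_num at this ⊢
    linarith
  rw [le_div_iff₀ hX] at hp
  rw [le_div_iff₀ hY] at hr
  refine ⟨by linarith [h10.1], by linarith [h01.1], by linarith, by linarith, ?_⟩
  have hdisc : discrim (1 / (1 - x ^ 2) - β / 2) (-(β * a)) (1 / (1 - y ^ 2) - β / 2) ≤ 0 := by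
    refine discrim_le_zero fun v => ?_
    have h3 := (H v 1).2
    have h4 : v ^ 2 / (1 - x ^ 2) = 1 / (1 - x ^ 2) * v ^ 2 := by ring
    rw [h4] at h3
    linarith
  rw [discrim] at hdisc
  have h5 := mul_nonneg (sub_nonneg.2 hdisc) (mul_nonneg hX.le hY.le)
  have h6 : (0 - ((-(β * a)) ^ 2 - 4 * (1 / (1 - x ^ 2) - β / 2) * (1 / (1 - y ^ 2) - β / 2))) *
      ((1 - x ^ 2) * (1 - y ^ 2)) = 4 * ((1 - β / 2 * (1 - x ^ 2)) * (1 - β / 2 * (1 - y ^ 2)) -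
        (β / 2 * a) ^ 2 * ((1 - x ^ 2) * (1 - y ^ 2))) := by
    have := hX.ne'
    have := hY.ne'
    field_simp
    ring
  rw [h6] at h5
  linarith

lemma eq_of_arctanh_eq_mul {k x m : ℝ} (hx : x ∈ Ioo (0 : ℝ) 1) (hm : m ∈ Ioo (0 : ℝ) 1)
    (ex : arctanh x = k * x) (em : arctanh m = k * m) : x = m := by
  refine strictMonoOn_arctanh_div.injOn hx hm ?_
  simp only [ex, em]
  rw [mul_div_cancel_right₀ _ hx.1.ne', mul_div_cancel_right₀ _ hm.1.ne']

lemma le_of_symmetric_critical {a b x y : ℝ} (ha : 0 < a) (hb : 0 < b)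
    (hx : x ∈ Ioo (0 : ℝ) 1) (hy : y ∈ Ioo (0 : ℝ) 1)
    (ex : arctanh x = b * (x + a * y)) (ey : arctanh y = b * (y + a * x)) : x ≤ y := by
  by_contra! h
  have := strictMonoOn_arctanh_div hy hx h
  simp only [ex, ey] at this
  rw [div_lt_div_iff₀ hy.1 hx.1] at this
  have h1 : 0 < b * a * (x ^ 2 - y ^ 2) := mul_pos (mul_pos hb ha) (by nlinarith [hy.1])
  linarith

lemma eq_or_eq_of_isLocalMaxOn_Gfun {α β mg ml x y : ℝ} (hα : 0 < α) (hα1 : α < 1)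
    (hβ : 1 < β / 2) (hmg : mg ∈ Ioo (0 : ℝ) 1) (hml : ml ∈ Ioo (0 : ℝ) 1)
    (emg : arctanh mg = β / 2 * (1 + α) * mg) (eml : arctanh ml = β / 2 * (1 - α) * ml)
    (hm : (x, y) ∈ box) (h : IsLocalMaxOn (Gfun α β) box (x, y)) (hx0 : 0 ≤ x) :
    (x = mg ∧ y = mg) ∨ (x = ml ∧ y = -ml) := by
  have hx := mem_Ioo_of_isLocalMaxOn_Gfun hα.le hα1.le (by linarith) hm h
  have hy := mem_Ioo_of_isLocalMaxOn_Gfun hα.le hα1.le (by linarith) (swap_mem_box hm)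
    (isLocalMaxOn_Gfun_swap h)
  obtain ⟨ex, ey, hX, hY, hdet⟩ := critical_of_isLocalMaxOn_Gfun hx hy h
  have hb : 0 < β / 2 := by linarith
  have hx0 : 0 < x := by
    refine hx0.lt_of_ne ?_
    rintro rfl
    linarith
  rcases lt_trichotomy y 0 with hy0 | rfl | hy0
  · right
    obtain ⟨z, rfl⟩ : ∃ z, y = -z := ⟨-y, by ring⟩
    rw [arctanh_neg] at ey
    rw [neg_sq] at hY hdet
    have ex' : arctanh x = β / 2 * (x - α * z) := by rw [ex]; ring
    have ez : arctanh z = β / 2 * (z - α * x) := by linarith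
    have hz0 : 0 < z := by linarith
    have hz1 : z < 1 := by linarith [hy.1]
    have hxz : x = z := by
      rcases lt_trichotomy x z with hlt | heq | hlt
      · exact (no_asymmetric_of_det_nonneg hb hx0 hlt hz1 ez ex' hY hX
          (by linarith)).elim
      · exact heq
      · exact (no_asymmetric_of_det_nonneg hb hz0 hlt hx.2 ex' ez hX hY hdet).elim
    subst hxz
    have := eq_of_arctanh_eq_mul ⟨hx0, hx.2⟩ hml (by rw [ex']; ring) eml
    exact ⟨this, by rw [this]⟩
  · linarith
  · left
    have hxy : x = y := le_antisymm
      (le_of_symmetric_critical hα hb ⟨hx0, hx.2⟩ ⟨hy0, hy.2⟩ ex ey)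
      (le_of_symmetric_critical hα hb ⟨hy0, hy.2⟩ ⟨hx0, hx.2⟩ ey ex)
    subst hxy
    have := eq_of_arctanh_eq_mul ⟨hx0, hx.2⟩ hmg (by rw [ex]; ring) emg
    exact ⟨this, this⟩

end

/-- for `α ∈ (0,1)` and `β > β*(α)`, `G_{α,β}` has exactly four local
maximizers on `[−1,1]²`: the global maximizers `±(m_g,m_g)` and the anti-symmetric local
maximizers `±(m_l,−m_l)`; at each of them the Hessian is negative definite. -/
theorem G_four_local_maximizers
    (α β tstar mg ml : ℝ) (hα : α ∈ Set.Ioo (0 : ℝ) 1)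
    (ht : tstar ∈ Set.Ioo (0 : ℝ) 1)
    (hteq : (1 - tstar ^ 2) * arctanh tstar / tstar = (1 - α) / (1 + α))
    (hβ : (2 / (1 - α)) * (arctanh tstar / tstar) < β)
    (hmg : 0 < mg) (hmgeq : mg = Real.tanh ((β / 2) * (1 + α) * mg))
    (hml : 0 < ml) (hmleq : ml = Real.tanh ((β / 2) * (1 - α) * ml)) :
    {m | m ∈ box ∧ IsLocalMaxOn (Gfun α β) box m} =
        {((mg, mg) : ℝ × ℝ), (-mg, -mg), (ml, -ml), (-ml, ml)} ∧
      (∀ m' ∈ box, Gfun α β m' ≤ Gfun α β (mg, mg)) ∧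
      Gfun α β (-mg, -mg) = Gfun α β (mg, mg) ∧
      (-(hessG α β (mg, mg))).PosDef ∧ (-(hessG α β (-mg, -mg))).PosDef ∧
      (-(hessG α β (ml, -ml))).PosDef ∧ (-(hessG α β (-ml, ml))).PosDef := by
  obtain ⟨hα0, hα1⟩ := hα
  have h1α : 0 < 1 - α := by linarith
  have hr : arctanh tstar / tstar < β / 2 * (1 - α) := by
    rw [div_mul_eq_mul_div, div_lt_iff₀ h1α] at hβ
    linarith
  have hr1 : 1 < arctanh tstar / tstar := (one_lt_div ht.1).2 (lt_arctanh ht.1 ht.2)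
  have hβ2 : 1 < β / 2 := by nlinarith
  have hβpos : 0 < β := by linarith
  have hβ0 := hβpos.le
  have hmg1 : mg < 1 := hmgeq ▸ Real.tanh_lt_one _
  have hml1 : ml < 1 := hmleq ▸ Real.tanh_lt_one _
  have emg : arctanh mg = β / 2 * (1 + α) * mg := by
    conv_lhs => rw [hmgeq]
    exact arctanh_tanh _
  have eml : arctanh ml = β / 2 * (1 - α) * ml := by
    conv_lhs => rw [hmleq]
    exact arctanh_tanh _
  have hmg2 : β / 2 * (1 + α) < 1 / (1 - mg ^ 2) := by
    have := arctanh_lt hmg hmg1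
    rw [emg, ← one_div_mul_eq_div (1 - mg ^ 2)] at this
    exact lt_of_mul_lt_mul_right this hmg.le
  have hml2 : β / 2 * (1 + α) < 1 / (1 - ml ^ 2) := by
    have hlt : tstar < ml := by
      refine (strictMonoOn_arctanh_div.lt_iff_lt ht ⟨hml, hml1⟩).1 ?_
      simp only [eml]
      rwa [mul_div_cancel_right₀ _ hml.ne']
    have := strictAntiOn_one_sub_sq_mul_arctanh_div ht ⟨hml, hml1⟩ hlt
    simp only [eml, hteq] at this
    rw [← mul_assoc, mul_div_cancel_right₀ _ hml.ne', lt_div_iff₀ (by linarith)] at this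
    rw [lt_div_iff₀ (one_sub_sq_pos (by linarith) hml1)]
    refine lt_of_mul_lt_mul_right ?_ h1α.le
    linarith
  have hclass : ∀ m ∈ box, IsLocalMaxOn (Gfun α β) box m →
      m ∈ ({((mg, mg) : ℝ × ℝ), (-mg, -mg), (ml, -ml), (-ml, ml)} : Set (ℝ × ℝ)) := by
    rintro ⟨x, y⟩ hm h
    simp only [Set.mem_insert_iff, Set.mem_singleton_iff, Prod.mk.injEq]
    rcases le_total 0 x with hx | hx
    · have := eq_or_eq_of_isLocalMaxOn_Gfun hα0 hα1 hβ2 ⟨hmg, hmg1⟩ ⟨hml, hml1⟩ emg eml hm h hx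
      tauto
    · rcases eq_or_eq_of_isLocalMaxOn_Gfun hα0 hα1 hβ2 ⟨hmg, hmg1⟩ ⟨hml, hml1⟩ emg eml
        (neg_mem_box hm) (isLocalMaxOn_Gfun_neg h) (by linarith) with ⟨h1, h2⟩ | ⟨h1, h2⟩
      · exact Or.inr (Or.inl ⟨by linarith, by linarith⟩)
      · exact Or.inr (Or.inr (Or.inr ⟨by linarith, by linarith⟩))
  have hneg : ∀ x y, Gfun α β (-x, -y) = Gfun α β (x, y) := fun x y => Gfun_neg α β (x, y)
  have hglobal : ∀ m' ∈ box, Gfun α β m' ≤ Gfun α β (mg, mg) := by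
    have hcomp : IsCompact box := isCompact_Icc.prod isCompact_Icc
    obtain ⟨M, hM, hmax⟩ := hcomp.exists_isMaxOn ⟨(0, 0), by simp [box]⟩
      (continuous_Gfun α β).continuousOn
    have hlt : Gfun α β (ml, -ml) < Gfun α β (ml, ml) := by
      have : 0 < β * α * ml ^ 2 := by positivity
      simp only [Gfun, Ebil, entI_neg]
      linarith
    have hmlbox : ((ml, ml) : ℝ × ℝ) ∈ box :=
      ⟨⟨by linarith, hml1.le⟩, by linarith, hml1.le⟩
    have hle : Gfun α β (ml, ml) ≤ Gfun α β M := hmax hmlbox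
    have hval : Gfun α β M = Gfun α β (mg, mg) := by
      rcases hclass M hM hmax.localize with rfl | rfl | rfl | rfl
      · rfl
      · exact hneg mg mg
      · exact absurd hlt hle.not_gt
      · rw [← hneg (-ml) ml, neg_neg] at hle
        exact absurd hlt hle.not_gt
    intro m' hm'
    rw [← hval]
    exact hmax hm'
  have hmgbox : ((mg, mg) : ℝ × ℝ) ∈ box := ⟨⟨by linarith, hmg1.le⟩, by linarith, hmg1.le⟩
  have hmlbox : ((ml, -ml) : ℝ × ℝ) ∈ box :=
    ⟨⟨by linarith, hml1.le⟩, by linarith, by linarith⟩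
  have hmgmax : IsLocalMaxOn (Gfun α β) box (mg, mg) := IsMaxOn.localize hglobal
  have hmlmax : IsLocalMaxOn (Gfun α β) box (ml, -ml) :=
    isLocalMaxOn_Gfun hα0.le hβ0 ⟨by linarith, hml1⟩ ⟨by linarith, by linarith⟩
      (by rw [eml]; ring) (by rw [arctanh_neg, eml]; ring) hml2 (by rwa [neg_sq])
  refine ⟨Set.Subset.antisymm (fun m hm => hclass m hm.1 hm.2) ?_, hglobal, hneg mg mg,
    posDef_neg_hessG hα0.le hβ0 hmg2 hmg2,
    posDef_neg_hessG hα0.le hβ0 (by rwa [neg_sq]) (by rwa [neg_sq]),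
    posDef_neg_hessG hα0.le hβ0 hml2 (by rwa [neg_sq]),
    posDef_neg_hessG hα0.le hβ0 (by rwa [neg_sq]) hml2⟩
  rintro m (rfl | rfl | rfl | rfl)
  · exact ⟨hmgbox, hmgmax⟩
  · exact ⟨neg_mem_box hmgbox, isLocalMaxOn_Gfun_neg hmgmax⟩
  · exact ⟨hmlbox, hmlmax⟩
  · exact ⟨swap_mem_box hmlbox, isLocalMaxOn_Gfun_swap hmlmax⟩

end
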